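/- In the N-player (n,m)-Bingo game with fixed cards c_1,…,c_N, one has 1 − S_{n,N} = ∫₀¹ Q_N(p) dp, where Q_N(p) is the probability that no number-set A ∈ 𝓛_N is fully marked when each of the m·n numbers is independently marked with probability p; consequently 0 < 1 − S_{n,N} < 1 and E[B_N] = (m·n + 1)·∫₀¹ Q_N(p) dp. -/

import Mathlib

open Finset

/-- The row of an `n × n` Bingo board through index `i`. -/
def bingoRow (n : ℕ) (i : Fin n) : Finset (Fin n × Fin n) :=
  Finset.univ.filter (fun s => s.1 = i)

/-- The column of an `n × n` Bingo board through index `j`. -/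
def bingoCol (n : ℕ) (j : Fin n) : Finset (Fin n × Fin n) :=
  Finset.univ.filter (fun s => s.2 = j)

/-- The main diagonal `{(i,i)}`. -/
def bingoDiag (n : ℕ) : Finset (Fin n × Fin n) :=
  Finset.univ.filter (fun s => (s.2 : ℕ) = (s.1 : ℕ))

/-- The anti-diagonal `{(i, n-1-i)}`. -/
def bingoAntiDiag (n : ℕ) : Finset (Fin n × Fin n) :=
  Finset.univ.filter (fun s => (s.2 : ℕ) = n - 1 - (s.1 : ℕ))

/-- The set `𝓛` of winning lines: `n` rows, `n` columns and the two diagonals. -/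
def bingoLines (n : ℕ) : Finset (Finset (Fin n × Fin n)) :=
  (Finset.univ.image (bingoRow n)) ∪ (Finset.univ.image (bingoCol n)) ∪
    {bingoDiag n, bingoAntiDiag n}

/-- An `(n,m)`-Bingo card: an injective assignment of numbers such that column `j`
only uses numbers in `[m*j, m*(j+1))`. -/
def IsBingoCard (n m : ℕ) (c : Fin n × Fin n → Fin (m * n)) : Prop :=
  Function.Injective c ∧
    ∀ i j : Fin n, m * (j : ℕ) ≤ (c (i, j) : ℕ) ∧ (c (i, j) : ℕ) < m * ((j : ℕ) + 1)

/-- Bingo is achieved within the first `k` calls of `σ`: some winning line has all of its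
numbers among `σ 0, …, σ (k-1)`. -/
def BingoWins (n m : ℕ) (c : Fin n × Fin n → Fin (m * n))
    (σ : Equiv.Perm (Fin (m * n))) (k : ℕ) : Prop :=
  ∃ L ∈ bingoLines n, ∀ s ∈ L, ∃ t : Fin (m * n), (t : ℕ) < k ∧ σ t = c s

/-- `S_n = ∑_{∅ ≠ X ⊆ 𝓛} (-1)^{|X|+1} / (m(X)+1)`, where `m(X)` is the number of squares
covered by the union of the lines in `X`. -/
noncomputable def Sn (n : ℕ) : ℝ :=
  ∑ X ∈ (bingoLines n).powerset.filter (fun X => X.Nonempty),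
    (-1 : ℝ) ^ (X.card + 1) / (((X.sup id).card : ℝ) + 1)

/-- The set `𝓛_N` of distinct number-sets of winning lines across the `N` cards. -/
def bingoLinesN (n m N : ℕ) (c : Fin N → Fin n × Fin n → Fin (m * n)) :
    Finset (Finset (Fin (m * n))) :=
  ((Finset.univ : Finset (Fin N)) ×ˢ bingoLines n).image
    (fun q => q.2.image (c q.1))

/-- Some number-set in `𝓛_N` is contained among the first `k` calls of `σ`. -/
def BingoWinsN (n m N : ℕ) (c : Fin N → Fin n × Fin n → Fin (m * n))
    (σ : Equiv.Perm (Fin (m * n))) (k : ℕ) : Prop :=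
  ∃ A ∈ bingoLinesN n m N c, ∀ x ∈ A, ∃ t : Fin (m * n), (t : ℕ) < k ∧ σ t = x

/-- `S_{n,N}` for a fixed realization of the `N` cards. -/
noncomputable def SnN (n m N : ℕ) (c : Fin N → Fin n × Fin n → Fin (m * n)) : ℝ :=
  ∑ Y ∈ (bingoLinesN n m N c).powerset.filter (fun Y => Y.Nonempty),
    (-1 : ℝ) ^ (Y.card + 1) / (((Y.sup id).card : ℝ) + 1)

/-- `Q_N(p)`: the probability that no number-set in `𝓛_N` is fully marked, when each of
the `m·n` numbers is independently marked with probability `p`. -/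
noncomputable def QmarkN (n m N : ℕ) (c : Fin N → Fin n × Fin n → Fin (m * n))
    (p : ℝ) : ℝ :=
  ∑ f ∈ (Finset.univ : Finset (Fin (m * n) → Bool)).filter
      (fun f => ¬ ∃ A ∈ bingoLinesN n m N c, ∀ x ∈ A, f x = true),
    ∏ x : Fin (m * n), (if f x then p else 1 - p)

/-!
The numbers marked, each independently with probability `p`, form the set `T` with probability
`p ^ |T| * (1 - p) ^ |Tᶜ|`. Calling a set independent when it contains no winning number-set,
`Q_N(p)` is the sum of these probabilities over the independent sets `T`.

Inclusion–exclusion over the subfamilies `Y` turns this sum into `∑ (-1) ^ |Y| p ^ m(Y)`, whose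
integral is `1 - S_{n,N}`. On the other hand, the beta integral of each term is
`|T|! |Tᶜ|! / (M + 1)!` with `M = m * n`, and `|T|! |Tᶜ|!` counts the orders of calls that start
with `T`. In a given order, the independent initial sets are those of the first
`0, 1, …, B_N - 1` calls, so there are `B_N` of them. Double counting gives
`E[B_N] = (M + 1) ∫ Q_N`, and `1 ≤ B_N ≤ M` then yields `0 < ∫ Q_N < 1`.
-/

theorem integral_pow_mul_one_sub_pow (a b : ℕ) :
    ∫ p in (0:ℝ)..1, p ^ a * (1 - p) ^ b =
      (a.factorial * b.factorial : ℝ) / (a + b + 1).factorial := by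
  have beta_eq := Complex.betaIntegral_eq_Gamma_mul_div (a + 1) (b + 1)
    (by norm_cast; positivity) (by norm_cast; positivity)
  have args : (a + 1 + (b + 1) : ℂ) = ((a + b + 1 : ℕ) : ℂ) + 1 := by push_cast; ring
  simp only [Complex.betaIntegral, add_sub_cancel_right, Complex.cpow_natCast, args,
    Complex.Gamma_nat_eq_factorial] at beta_eq
  apply Complex.ofReal_injective
  rw [← intervalIntegral.integral_ofReal]
  push_cast
  exact beta_eq

section SetFamily

variable {α : Type*} [DecidableEq α]

/-- The inclusion–exclusion sum of `1 / (|⋃ Y| + 1)` over the nonempty subfamilies `Y` of `F`. -/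
noncomputable def unionSum (F : Finset (Finset α)) : ℝ :=
  ∑ Y ∈ F.powerset.filter (fun Y => Y.Nonempty),
    (-1 : ℝ) ^ (#Y + 1) / ((#(Y.sup id) : ℝ) + 1)

theorem one_sub_unionSum (F : Finset (Finset α)) :
    1 - unionSum F = ∑ Y ∈ F.powerset, (-1 : ℝ) ^ #Y / ((#(Y.sup id) : ℝ) + 1) := by
  have nonempty_subfamilies : F.powerset.filter (fun Y => Y.Nonempty) = F.powerset.erase ∅ := by
    ext Y; simp [nonempty_iff_ne_empty, and_comm]
  rw [unionSum, nonempty_subfamilies, ← add_sum_erase _ _ (empty_mem_powerset F), sub_eq_add_neg,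
    ← sum_neg_distrib]
  simp [pow_succ, neg_div]

variable [Fintype α]

theorem sum_superset_pow_mul_pow {R : Type*} [CommSemiring R] (a b : R) (U : Finset α) :
    ∑ T with U ⊆ T, a ^ #T * b ^ #Tᶜ = a ^ #U * (a + b) ^ #Uᶜ := by
  rw [← sum_pow_mul_eq_add_pow a b Uᶜ, mul_sum]
  refine sum_nbij' (· \ U) (U ∪ ·) ?_ ?_ ?_ ?_ ?_
  · intro T _
    simp [sdiff_eq_inter_compl]
  · intro V _
    simp
  · intro T hT
    exact union_sdiff_of_subset (mem_filter_univ T |>.1 hT)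
  · intro V hV
    exact union_sdiff_cancel_left (disjoint_left.2 fun x hU hV' =>
      mem_compl.1 (mem_powerset.1 hV hV') hU)
  · intro T hT
    have hUT : U ⊆ T := mem_filter_univ T |>.1 hT
    have card_T : #T = #U + #(T \ U) := by
      rw [add_comm, card_sdiff_add_card_eq_card hUT]
    have card_compl_T : #Tᶜ = #Uᶜ - #(T \ U) := by
      rw [card_compl, card_compl, card_T]; omega
    rw [card_T, card_compl_T, pow_add, mul_assoc]

/-- The sets of points that contain no member of the family `F`: the independent sets of the
hypergraph with edge set `F`. -/
def independentSets (F : Finset (Finset α)) : Finset (Finset α) :=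
  {T | ∀ A ∈ F, ¬ A ⊆ T}

theorem mem_independentSets {F : Finset (Finset α)} {T : Finset α} :
    T ∈ independentSets F ↔ ∀ A ∈ F, ¬ A ⊆ T :=
  mem_filter_univ T

theorem sum_independentSets {G : Type*} [AddCommGroup G] (F : Finset (Finset α))
    (f : Finset α → G) :
    ∑ T ∈ independentSets F, f T =
      ∑ Y ∈ F.powerset, (-1 : ℤ) ^ #Y • ∑ T with Y.sup id ⊆ T, f T := by
  have avoiding : independentSets F = F.inf fun A => ({T | A ⊆ T} : Finset (Finset α))ᶜ := by
    ext T; simp [independentSets, Finset.mem_inf]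
  rw [avoiding, inclusion_exclusion_sum_inf_compl]
  refine sum_congr rfl fun Y _ => ?_
  congr 2
  ext T
  simp [Finset.mem_inf]

/-- The probability that no member of the family `F` is fully marked, when each point is marked
independently with probability `p`; a marking is encoded as a Boolean function. -/
noncomputable def avoidanceProb (F : Finset (Finset α)) (p : ℝ) : ℝ :=
  ∑ f ∈ (univ : Finset (α → Bool)).filter (fun f => ¬ ∃ A ∈ F, ∀ x ∈ A, f x = true),
    ∏ x, (if f x then p else 1 - p)

theorem avoidanceProb_eq_sum_independentSets (F : Finset (Finset α)) (p : ℝ) :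
    avoidanceProb F p = ∑ T ∈ independentSets F, p ^ #T * (1 - p) ^ #Tᶜ := by
  refine sum_nbij' (fun f => ({x | f x} : Finset α)) (fun T x => decide (x ∈ T)) ?_ ?_ ?_ ?_ ?_
  · intro f hf
    simpa [mem_independentSets, subset_iff] using hf
  · intro T hT
    simpa [mem_independentSets, subset_iff] using hT
  · intro f _
    simp
  · intro T _
    simp
  · intro f _
    rw [prod_ite, prod_const, prod_const, compl_filter]

theorem avoidanceProb_eq_sum_powerset (F : Finset (Finset α)) (p : ℝ) :
    avoidanceProb F p = ∑ Y ∈ F.powerset, (-1) ^ #Y * p ^ #(Y.sup id) := by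
  rw [avoidanceProb_eq_sum_independentSets, sum_independentSets]
  refine sum_congr rfl fun Y _ => ?_
  rw [sum_superset_pow_mul_pow, add_sub_cancel, one_pow, mul_one, zsmul_eq_mul]
  push_cast
  rfl

theorem integral_avoidanceProb_eq_one_sub_unionSum (F : Finset (Finset α)) :
    ∫ p in (0:ℝ)..1, avoidanceProb F p = 1 - unionSum F := by
  simp only [avoidanceProb_eq_sum_powerset, one_sub_unionSum]
  rw [intervalIntegral.integral_finsetSum fun _ _ =>
    Continuous.intervalIntegrable (by fun_prop) _ _]
  simp [div_eq_mul_inv]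

theorem integral_avoidanceProb_eq_sum_factorial (F : Finset (Finset α)) :
    ∫ p in (0:ℝ)..1, avoidanceProb F p =
      (∑ T ∈ independentSets F, ((#T).factorial * (#Tᶜ).factorial : ℝ)) /
        (Fintype.card α + 1).factorial := by
  simp only [avoidanceProb_eq_sum_independentSets]
  rw [intervalIntegral.integral_finsetSum fun _ _ =>
    Continuous.intervalIntegrable (by fun_prop) _ _]
  simp only [integral_pow_mul_one_sub_pow, card_add_card_compl, sum_div]

end SetFamily

section Calls

open scoped BigOperators

variable {α : Type*} {M : ℕ}

/-- Some member of the family `F` is contained among the first `k` calls of the order `σ`. -/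
def CompletedBy (F : Finset (Finset α)) (σ : Fin M ≃ α) (k : ℕ) : Prop :=
  ∃ A ∈ F, ∀ x ∈ A, ∃ t : Fin M, (t : ℕ) < k ∧ σ t = x

theorem CompletedBy.mono {F : Finset (Finset α)} {σ : Fin M ≃ α} {k l : ℕ}
    (h : CompletedBy F σ k) (hkl : k ≤ l) : CompletedBy F σ l := by
  obtain ⟨A, hA, called⟩ := h
  refine ⟨A, hA, fun x hx => ?_⟩
  obtain ⟨t, ht, rfl⟩ := called x hx
  exact ⟨t, ht.trans_le hkl, rfl⟩

theorem CompletedBy.pos {F : Finset (Finset α)} {σ : Fin M ≃ α} {k : ℕ}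
    (hF : ∅ ∉ F) (h : CompletedBy F σ k) : 1 ≤ k := by
  obtain ⟨A, hA, called⟩ := h
  obtain ⟨x, hx⟩ := nonempty_iff_ne_empty.2 (ne_of_mem_of_not_mem hA hF)
  obtain ⟨t, ht, -⟩ := called x hx
  omega

theorem CompletedBy.min {F : Finset (Finset α)} {σ : Fin M ≃ α} {k : ℕ}
    (h : CompletedBy F σ k) : CompletedBy F σ (min k M) := by
  obtain ⟨A, hA, called⟩ := h
  refine ⟨A, hA, fun x hx => ?_⟩
  obtain ⟨t, ht, rfl⟩ := called x hx
  exact ⟨t, lt_min ht t.2, rfl⟩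

/-- `b` is the first time `k ≥ 1` at which the order `σ` has completed a member of `F`, that is,
the value `B_N(σ)` of the paper. -/
def IsCompletionTime (F : Finset (Finset α)) (σ : Fin M ≃ α) (b : ℕ) : Prop :=
  IsLeast {k : ℕ | 1 ≤ k ∧ CompletedBy F σ k} b

namespace IsCompletionTime

variable {F : Finset (Finset α)} {σ : Fin M ≃ α} {b : ℕ}

theorem completedBy_iff (hb : IsCompletionTime F σ b) (hF : ∅ ∉ F) {k : ℕ} :
    CompletedBy F σ k ↔ b ≤ k :=
  ⟨fun h => hb.2 ⟨h.pos hF, h⟩, hb.1.2.mono⟩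

theorem one_le (hb : IsCompletionTime F σ b) : 1 ≤ b :=
  hb.1.1

theorem le_card_calls (hb : IsCompletionTime F σ b) (hF : ∅ ∉ F) : b ≤ M :=
  ((hb.completedBy_iff hF).1 hb.1.2.min).trans (min_le_right b M)

end IsCompletionTime

variable [Fintype α]

/-- The set of the first `k` points called in the order `σ`. -/
def firstCalls (σ : Fin M ≃ α) (k : ℕ) : Finset α :=
  {x | (σ.symm x : ℕ) < k}

theorem mem_firstCalls {σ : Fin M ≃ α} {k : ℕ} {x : α} :
    x ∈ firstCalls σ k ↔ (σ.symm x : ℕ) < k :=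
  mem_filter_univ x

theorem card_firstCalls (σ : Fin M ≃ α) {k : ℕ} (hk : k ≤ M) : #(firstCalls σ k) = k := by
  have card_eq : #(firstCalls σ k) = #{t : Fin M | (t : ℕ) < k} :=
    card_equiv σ.symm fun x => by simp [mem_firstCalls]
  rw [card_eq, Fin.card_filter_val_lt, min_eq_right hk]

theorem isPrefix_symm_iff {σ : Fin (Fintype.card α) ≃ α} {T : Finset α} :
    Numbering.IsPrefix σ.symm T ↔ firstCalls σ #T = T := by
  simp only [Numbering.IsPrefix, Finset.ext_iff, mem_firstCalls, iff_comm]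

variable [DecidableEq α] {F : Finset (Finset α)}

theorem firstCalls_mem_independentSets_iff {σ : Fin M ≃ α} {k : ℕ} :
    firstCalls σ k ∈ independentSets F ↔ ¬ CompletedBy F σ k := by
  have called_iff (x : α) : (∃ t : Fin M, (t : ℕ) < k ∧ σ t = x) ↔ x ∈ firstCalls σ k := by
    simp [mem_firstCalls, ← Equiv.eq_symm_apply]
  simp only [mem_independentSets, CompletedBy, called_iff, subset_iff, not_exists, not_and]

theorem IsCompletionTime.card_independent_prefixes {σ : Fin (Fintype.card α) ≃ α} {b : ℕ}
    (hb : IsCompletionTime F σ b) (hF : ∅ ∉ F) :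
    #{T ∈ independentSets F | Numbering.IsPrefix σ.symm T} = b := by
  have independent_iff {k : ℕ} : firstCalls σ k ∈ independentSets F ↔ k < b := by
    rw [firstCalls_mem_independentSets_iff, hb.completedBy_iff hF, not_le]
  have card_first {k : ℕ} (hk : k < b) : #(firstCalls σ k) = k :=
    card_firstCalls σ (hk.le.trans (hb.le_card_calls hF))
  rw [← card_range b]
  refine card_nbij' card (firstCalls σ) ?_ ?_ ?_ ?_
  · intro T hT
    simp only [coe_filter, Set.mem_ofPred_eq, isPrefix_symm_iff] at hT
    exact mem_coe.2 (mem_range.2 (independent_iff.1 (hT.2.symm ▸ hT.1)))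
  · intro k hk
    have hkb : k < b := mem_range.1 hk
    simp [isPrefix_symm_iff, independent_iff, card_first hkb, hkb]
  · intro T hT
    exact isPrefix_symm_iff.1 (mem_filter.1 hT).2
  · intro k hk
    exact card_first (mem_range.1 hk)

theorem sum_completionTime {B : (Fin (Fintype.card α) ≃ α) → ℕ}
    (hB : ∀ σ, IsCompletionTime F σ (B σ)) (hF : ∅ ∉ F) :
    ∑ σ, B σ = ∑ T ∈ independentSets F, (#T).factorial * (#Tᶜ).factorial := by
  calc ∑ σ, B σ
      = ∑ σ : Fin (Fintype.card α) ≃ α,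
          #{T ∈ independentSets F | Numbering.IsPrefix σ.symm T} :=
        sum_congr rfl fun σ _ => ((hB σ).card_independent_prefixes hF).symm
    _ = ∑ f : Numbering α, #{T ∈ independentSets F | f.IsPrefix T} :=
        (Equiv.symmEquiv _ _).sum_comp fun f : Numbering α =>
          #{T ∈ independentSets F | f.IsPrefix T}
    _ = ∑ T ∈ independentSets F, #(Numbering.prefixed T) :=
        sum_card_bipartiteAbove_eq_sum_card_bipartiteBelow _
    _ = ∑ T ∈ independentSets F, (#T).factorial * (#Tᶜ).factorial := by
        simp only [Numbering.card_prefixed, card_compl]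

theorem sum_div_factorial_eq_expect (hM : Fintype.card α = M) (f : (Fin M ≃ α) → ℝ) :
    (∑ σ, f σ) / M.factorial = 𝔼 σ, f σ := by
  have order : Fin M ≃ α := (Fintype.equivFinOfCardEq hM).symm
  rw [Fintype.expect_eq_sum_div_card, Fintype.card_equiv order, Fintype.card_fin]

theorem expect_completionTime {B : (Fin M ≃ α) → ℕ} (hM : Fintype.card α = M)
    (hB : ∀ σ, IsCompletionTime F σ (B σ)) (hF : ∅ ∉ F) :
    𝔼 σ, (B σ : ℝ) = (M + 1) * ∫ p in (0:ℝ)..1, avoidanceProb F p := by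
  rw [← sum_div_factorial_eq_expect hM]
  subst hM
  rw [integral_avoidanceProb_eq_sum_factorial, Nat.factorial_succ]
  have sum_eq := congrArg (Nat.cast (R := ℝ)) (sum_completionTime hB hF)
  push_cast at sum_eq ⊢
  rw [sum_eq]
  field_simp

theorem expect_completionTime_mem_Icc {B : (Fin M ≃ α) → ℕ} (hM : Fintype.card α = M)
    (hB : ∀ σ, IsCompletionTime F σ (B σ)) (hF : ∅ ∉ F) :
    𝔼 σ, (B σ : ℝ) ∈ Set.Icc (1:ℝ) M := by
  have : Nonempty (Fin M ≃ α) := ⟨(Fintype.equivFinOfCardEq hM).symm⟩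
  exact ⟨le_expect univ_nonempty fun σ _ => by exact_mod_cast (hB σ).one_le,
    expect_le univ_nonempty fun σ _ => by exact_mod_cast (hB σ).le_card_calls hF⟩

theorem bingo_multiplayer_integral_general {B : (Fin M ≃ α) → ℕ} (hM : Fintype.card α = M)
    (hB : ∀ σ, IsCompletionTime F σ (B σ)) (hF : ∅ ∉ F) :
    (1 - unionSum F = ∫ p in (0:ℝ)..1, avoidanceProb F p) ∧
    (0 < 1 - unionSum F) ∧ (1 - unionSum F < 1) ∧
    ((∑ σ, (B σ : ℝ)) / M.factorial = (M + 1) * ∫ p in (0:ℝ)..1, avoidanceProb F p) := by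
  have expect_eq := expect_completionTime hM hB hF
  obtain ⟨one_le_expect, expect_le_card⟩ := expect_completionTime_mem_Icc hM hB hF
  rw [sum_div_factorial_eq_expect hM]
  rw [integral_avoidanceProb_eq_one_sub_unionSum] at expect_eq ⊢
  rw [expect_eq] at one_le_expect expect_le_card
  refine ⟨rfl, ?_, ?_, expect_eq⟩
  · exact pos_of_mul_pos_right (zero_lt_one.trans_le one_le_expect) (by positivity)
  · exact lt_of_mul_lt_mul_left (by linarith) (by positivity : (0:ℝ) ≤ M + 1)

end Calls

theorem nonempty_of_mem_bingoLines {n : ℕ} (hn : 1 ≤ n) {L : Finset (Fin n × Fin n)}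
    (hL : L ∈ bingoLines n) : L.Nonempty := by
  simp only [bingoLines, mem_union, mem_image, mem_univ, true_and, mem_insert,
    mem_singleton] at hL
  rcases hL with (⟨i, rfl⟩ | ⟨j, rfl⟩) | rfl | rfl
  · exact ⟨(i, i), by simp [bingoRow]⟩
  · exact ⟨(j, j), by simp [bingoCol]⟩
  · exact ⟨(⟨0, hn⟩, ⟨0, hn⟩), by simp [bingoDiag]⟩
  · exact ⟨(⟨0, hn⟩, ⟨n - 1, by omega⟩), by simp [bingoAntiDiag]⟩

theorem empty_notMem_bingoLinesN {n m N : ℕ} (hn : 1 ≤ n)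
    (c : Fin N → Fin n × Fin n → Fin (m * n)) : ∅ ∉ bingoLinesN n m N c := by
  simp only [bingoLinesN, mem_image, mem_product, mem_univ, true_and, image_eq_empty]
  rintro ⟨⟨a, L⟩, hL, rfl⟩
  exact not_nonempty_empty (nonempty_of_mem_bingoLines hn hL)

-- Not `rfl`: the two filters decide their predicates by different procedures.
theorem QmarkN_eq_avoidanceProb (n m N : ℕ) (c : Fin N → Fin n × Fin n → Fin (m * n)) (p : ℝ) :
    QmarkN n m N c p = avoidanceProb (bingoLinesN n m N c) p := by
  rw [QmarkN, avoidanceProb]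
  congr!

/-- `1 - S_{n,N} = ∫₀¹ Q_N(p) dp`, consequently `0 < 1 - S_{n,N} < 1` and
`E[B_N] = (m·n + 1)·∫₀¹ Q_N(p) dp`. -/
theorem bingo_multiplayer_integral (n m N : ℕ) (hn : 1 ≤ n) (hm : n ≤ m) (hN : 1 ≤ N)
    (c : Fin N → Fin n × Fin n → Fin (m * n)) (hc : ∀ a, IsBingoCard n m (c a))
    (B : Equiv.Perm (Fin (m * n)) → ℕ)
    (hB : ∀ σ, IsLeast {k : ℕ | 1 ≤ k ∧ BingoWinsN n m N c σ k} (B σ)) :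
    (1 - SnN n m N c = ∫ p in (0:ℝ)..1, QmarkN n m N c p) ∧
    (0 < 1 - SnN n m N c) ∧ (1 - SnN n m N c < 1) ∧
    ((∑ σ : Equiv.Perm (Fin (m * n)), (B σ : ℝ)) / (Nat.factorial (m * n)) =
      ((m * n : ℕ) + 1) * ∫ p in (0:ℝ)..1, QmarkN n m N c p) := by
  simp only [QmarkN_eq_avoidanceProb]
  exact bingo_multiplayer_integral_general (Fintype.card_fin _) hB (empty_notMem_bingoLinesN hn c)
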